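/- Let s be a positive integer, let A be a set of n positive integers with total sum N, let 1 ≤ k < n, and let B_0 < B_1 < ... < B_m be a strictly increasing chain of k-element subsets of A (in the order where B ≤ C iff the i-th smallest element of B is at most the i-th smallest element of C for every i) such that each B_j is an s-divisor of A. Then every element a ∈ B_0 satisfies a·(s+m) < s·N. -/

import Mathlib

/-- The `i`-th smallest element of a finset of naturals (0-indexed; junk value `0` if
`i` is out of range). -/
def kthSmallest (B : Finset ℕ) (i : ℕ) : ℕ :=
  (B.sort (· ≤ ·)).getD i 0

/-- The partial order on `k`-element subsets: `B ≤ C` iff for each `i < k`, the `i`-th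
smallest element of `B` is at most the `i`-th smallest element of `C`. -/
def SubsetLE (k : ℕ) (B C : Finset ℕ) : Prop :=
  ∀ i < k, kthSmallest B i ≤ kthSmallest C i

theorem sum_kthSmallest (B : Finset ℕ) :
    B.sum id = ∑ i ∈ Finset.range B.card, kthSmallest B i := by
  have h1 : B.sum id = (B.sort (· ≤ ·)).sum := by
    have h := congrArg Multiset.sum (Finset.sort_eq B (· ≤ ·))
    rw [Multiset.sum_coe] at h
    rw [h]
    exact (congrArg Multiset.sum (Multiset.map_id B.val))
  have h2 : ∀ l : List ℕ, l.sum = ∑ i ∈ Finset.range l.length, l.getD i 0 := by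
    intro l
    induction l with
    | nil => simp
    | cons a t ih =>
      rw [List.sum_cons, List.length_cons, Finset.sum_range_succ', ih]
      simp [add_comm]
  rw [h1, h2]
  simp [kthSmallest]

theorem sum_lt_of_subsetLE (k : ℕ) (B C : Finset ℕ) (hB : B.card = k) (hC : C.card = k)
    (h : SubsetLE k B C) (hne : B ≠ C) : B.sum id < C.sum id := by
  rw [sum_kthSmallest B, sum_kthSmallest C, hB, hC]
  apply Finset.sum_lt_sum
  · intro i hi
    exact h i (Finset.mem_range.1 hi)
  · by_contra hcon
    push Not at hcon
    apply hne
    have hl : B.sort (· ≤ ·) = C.sort (· ≤ ·) := by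
      apply List.ext_getElem
      · simp [hB, hC]
      · intro i h1 h2
        have hi : i < k := by simpa [hB] using h1
        have e := le_antisymm (h i hi) (hcon i (Finset.mem_range.2 hi))
        unfold kthSmallest at e
        rwa [List.getD_eq_getElem _ _ h1, List.getD_eq_getElem _ _ h2] at e
    rw [← Finset.sort_toFinset B (· ≤ ·), hl, Finset.sort_toFinset]

/-- **Remark 6.** If `B₀ < B₁ < ⋯ < B_m` is a strictly increasing chain of `k`-element
subsets of `A` (with `1 ≤ k < n = |A|`), each an `s`-divisor of `A`, then every
`a ∈ B₀` satisfies `a · (s + m) < s · ∑ A`. -/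
theorem chain_gives_small_elements (s n k m : ℕ) (hs : 0 < s)
    (A : Finset ℕ) (hApos : ∀ a ∈ A, 0 < a) (hcard : A.card = n)
    (hk1 : 1 ≤ k) (hkn : k < n)
    (B : Fin (m + 1) → Finset ℕ)
    (hBsub : ∀ j, B j ⊆ A) (hBcard : ∀ j, (B j).card = k)
    (hchain : ∀ j : Fin m,
      SubsetLE k (B j.castSucc) (B j.succ) ∧ B j.castSucc ≠ B j.succ)
    (hdiv : ∀ j, (B j).sum id ∣ s * A.sum id) :
    ∀ a ∈ B 0, a * (s + m) < s * A.sum id := by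
  have hlt : ∀ j, (B j).sum id < A.sum id := by
    intro j
    have hne : B j ≠ A := by
      intro e
      have := hBcard j
      rw [e] at this
      omega
    obtain ⟨x, hxA, hxB⟩ := Finset.exists_of_ssubset ((hBsub j).ssubset_of_ne hne)
    exact Finset.sum_lt_sum_of_subset (hBsub j) hxA hxB (hApos x hxA) (fun _ _ _ => Nat.zero_le _)
  have hpos : 0 < s * A.sum id := Nat.mul_pos hs (lt_of_le_of_lt (Nat.zero_le _) (hlt 0))
  choose q hq using hdiv
  have hstep : ∀ j : Fin m, q j.succ < q j.castSucc := by
    intro j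
    have h := sum_lt_of_subsetLE k _ _ (hBcard _) (hBcard _) (hchain j).1 (hchain j).2
    have e1 := hq j.succ
    have e2 := hq j.castSucc
    by_contra hcon
    push Not at hcon
    have h0 : 0 < q j.succ := by
      rcases Nat.eq_zero_or_pos (q j.succ) with h0 | h0
      · rw [h0] at e1; omega
      · exact h0
    have h1 := Nat.mul_le_mul_left ((B j.castSucc).sum id) hcon
    have h2 := Nat.mul_lt_mul_of_pos_right h h0
    omega
  have key : ∀ j : Fin (m + 1), s + 1 + m ≤ q j + j.val := by
    intro j
    induction j using Fin.reverseInduction with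
    | last =>
      have e := hq (Fin.last m)
      have h := hlt (Fin.last m)
      have : s < q (Fin.last m) := by
        by_contra hcon
        push Not at hcon
        have h1 := Nat.mul_le_mul_left ((B (Fin.last m)).sum id) hcon
        have h2 := Nat.mul_lt_mul_of_pos_left h hs
        rw [mul_comm _ s] at h1
        omega
      simp
      omega
    | cast j ih =>
      have := hstep j
      simp at ih ⊢
      omega
  intro a ha
  have h0 := key 0
  simp at h0
  have hle : a ≤ (B 0).sum id :=
    Finset.single_le_sum (f := id) (fun _ _ => Nat.zero_le _) ha
  have ha0 := hApos a (hBsub 0 ha)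
  rw [hq 0]
  calc a * (s + m) < a * q 0 := Nat.mul_lt_mul_of_pos_left (by omega) ha0
    _ ≤ _ := Nat.mul_le_mul_right _ hle
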